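/- arXiv:1209.2300 — 10 statements merged into one kernel-verified Lean document; each statement's English description precedes it below -/
import Mathlib

section
/- Let X be a finite metric space. Then the function t ↦ E₀(tX) is monotonically increasing on (0,∞), where tX denotes X with all distances multiplied by t. -/
/-- For a finite metric space `X`, the spread `E₀(tX)` of the space with all
distances scaled by `t` is monotonically increasing in `t` on `(0, ∞)`. -/
theorem spread_monotone_in_scale
    (X : Type*) [MetricSpace X] [Fintype X]
    (s t : ℝ) (hs : 0 < s) (hst : s ≤ t) :
    ∑ x : X, (∑ x' : X, Real.exp (-(s * dist x x')))⁻¹ ≤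
      ∑ x : X, (∑ x' : X, Real.exp (-(t * dist x x')))⁻¹ := by
  refine Finset.sum_le_sum fun x _ => ?_
  refine inv_anti₀ ?_ ?_
  · exact Finset.sum_pos (fun x' _ => Real.exp_pos _) ⟨x, Finset.mem_univ x⟩
  · refine Finset.sum_le_sum fun x' _ => ?_
    exact Real.exp_le_exp.mpr
      (neg_le_neg (mul_le_mul_of_nonneg_right hst dist_nonneg))
end

section
/- Let X be a finite metric space with points x₁,…,x_N and let Z be the N×N matrix with entries Z_{ij} = e^{−d(x_i,x_j)}. If Z is positive definite, then the spread of X is bounded above by the magnitude of X: Σ_{i=1}^N (Σ_{j=1}^N Z_{ij})^{−1} ≤ Σ_{i,j=1}^N (Z^{−1})_{ij}. -/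
/-- If the similarity matrix `Z_{ij} = e^{-d(x_i,x_j)}` of a finite metric space
is positive definite, then the spread is bounded above by the magnitude:
`∑_i (∑_j Z_{ij})⁻¹ ≤ ∑_{i,j} (Z⁻¹)_{ij}`. -/
theorem spread_le_magnitude_of_posDef
    (X : Type*) [MetricSpace X] [Fintype X] [DecidableEq X]
    (Z : Matrix X X ℝ)
    (hZ : Z = Matrix.of fun i j => Real.exp (-dist i j))
    (hpd : Z.PosDef) :
    ∑ i : X, (∑ j : X, Z i j)⁻¹ ≤ ∑ i : X, ∑ j : X, Z⁻¹ i j := by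
  have hpos : ∀ i j, 0 < Z i j := fun i j => by rw [hZ]; exact Real.exp_pos _
  have hsymm : ∀ i j, Z i j = Z j i := fun i j => by
    rw [hZ]; simp [dist_comm]
  have hr : ∀ i, 0 < ∑ j, Z i j := fun i =>
    Finset.sum_pos (fun j _ => hpos i j) ⟨i, Finset.mem_univ i⟩
  set v : X → ℝ := fun i => (∑ j, Z i j)⁻¹ with hv
  have hvr : ∀ i, v i * ∑ j, Z i j = 1 := fun i => inv_mul_cancel₀ (hr i).ne'
  have hu : IsUnit Z.det := hpd.det_pos.ne'.isUnit
  let w : X → ℝ := fun i => ∑ j, Z⁻¹ i j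
  have hw : ∀ i, ∑ j, Z i j * w j = 1 := by
    intro i
    have h1 : Z.mulVec (Z⁻¹.mulVec 1) = 1 := by
      rw [Matrix.mulVec_mulVec, Matrix.mul_nonsing_inv _ hu, Matrix.one_mulVec]
    have h2 := congrFun h1 i
    simpa [Matrix.mulVec, dotProduct, w] using h2
  have hq : 0 ≤ ∑ i, (w i - v i) * ∑ j, Z i j * (w j - v j) := by
    have h := hpd.posSemidef.dotProduct_mulVec_nonneg (fun i => w i - v i)
    simpa [Matrix.mulVec, dotProduct] using h
  have hww : ∑ i, w i * ∑ j, Z i j * w j = ∑ i, w i := by simp [hw]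
  have hvw : ∑ i, v i * ∑ j, Z i j * w j = ∑ i, v i := by simp [hw]
  have hwv : ∑ i, w i * ∑ j, Z i j * v j = ∑ i, v i := by
    rw [← hvw]
    simp only [Finset.mul_sum]
    rw [Finset.sum_comm]
    refine Finset.sum_congr rfl fun i _ => Finset.sum_congr rfl fun j _ => ?_
    rw [hsymm j i]; ring
  have hA : ∑ i, ∑ j, Z i j * v i ^ 2 = ∑ i, v i := by
    refine Finset.sum_congr rfl fun i _ => ?_
    rw [← Finset.sum_mul]
    linear_combination v i * hvr i
  have hB : ∑ i, ∑ j, Z i j * v j ^ 2 = ∑ i, v i := by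
    rw [← hA, Finset.sum_comm]
    refine Finset.sum_congr rfl fun i _ => Finset.sum_congr rfl fun j _ => ?_
    rw [hsymm j i]
  have hvv : 2 * ∑ i, v i * ∑ j, Z i j * v j ≤ 2 * ∑ i, v i := by
    have : 2 * ∑ i, v i = ∑ i, ∑ j, (Z i j * v i ^ 2 + Z i j * v j ^ 2) := by
      simp only [Finset.sum_add_distrib]
      rw [hA, hB]; ring
    rw [this]
    simp only [Finset.mul_sum]
    refine Finset.sum_le_sum fun i _ => Finset.sum_le_sum fun j _ => ?_
    nlinarith [mul_nonneg (hpos i j).le (sq_nonneg (v i - v j))]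
  have hexp : ∑ i, (w i - v i) * ∑ j, Z i j * (w j - v j)
      = ∑ i, w i * ∑ j, Z i j * w j - ∑ i, w i * ∑ j, Z i j * v j
        - ∑ i, v i * ∑ j, Z i j * w j + ∑ i, v i * ∑ j, Z i j * v j := by
    rw [← Finset.sum_sub_distrib, ← Finset.sum_sub_distrib, ← Finset.sum_add_distrib]
    refine Finset.sum_congr rfl fun i _ => ?_
    simp only [mul_sub, Finset.sum_sub_distrib]
    ring
  change ∑ i, v i ≤ ∑ i, w i
  linarith
end

section
/- Let X be a homogeneous finite metric space with N points, i.e. for every pair of points x, y ∈ X there is a distance-preserving bijection f : X → X with f(x) = y. Then there exists a weighting w : X → ℝ (meaning Σ_{x∈X} w(x) e^{−d(x,y)} = 1 for all y ∈ X) whose total weight equals the spread: Σ_{x∈X} w(x) = E₀(X). -/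
/-- A homogeneous finite metric space admits a weighting whose total weight
equals the spread: the magnitude and the spread coincide. -/
theorem homogeneous_weighting_total_eq_spread
    (X : Type*) [MetricSpace X] [Fintype X]
    (hhom : ∀ x y : X, ∃ f : X ≃ᵢ X, f x = y) :
    ∃ w : X → ℝ,
      (∀ y : X, ∑ x : X, w x * Real.exp (-dist x y) = 1) ∧
      ∑ x : X, w x = ∑ x : X, (∑ x' : X, Real.exp (-dist x x'))⁻¹ := by
  have key : ∀ x y : X, ∑ x' : X, Real.exp (-dist x x') = ∑ x' : X, Real.exp (-dist y x') := by
    intro x y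
    obtain ⟨f, rfl⟩ := hhom x y
    rw [← Equiv.sum_comp f.toEquiv (fun x' => Real.exp (-dist (f x) x'))]
    refine Finset.sum_congr rfl fun z _ => ?_
    have h : dist (f x) (f.toEquiv z) = dist x z := f.isometry.dist_eq x z
    rw [h]
  refine ⟨fun x => (∑ x' : X, Real.exp (-dist x x'))⁻¹, fun y => ?_, rfl⟩
  have hpos : 0 < ∑ x' : X, Real.exp (-dist y x') :=
    Finset.sum_pos (fun _ _ => Real.exp_pos _) ⟨y, Finset.mem_univ y⟩
  calc ∑ x : X, (∑ x' : X, Real.exp (-dist x x'))⁻¹ * Real.exp (-dist x y)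
      = ∑ x : X, (∑ x' : X, Real.exp (-dist y x'))⁻¹ * Real.exp (-dist y x) := by
        refine Finset.sum_congr rfl fun x _ => ?_
        rw [key x y, dist_comm x y]
    _ = 1 := by
        rw [← Finset.mul_sum]
        exact inv_mul_cancel₀ hpos.ne'
end

section
/- Let X be a homogeneous finite metric space with N points x₁,…,x_N, i.e. for every pair of points there is a distance-preserving bijection of X sending one to the other. Then for every real q ≥ 0 with q ≠ 1 and every point x₀ ∈ X, the q-spread satisfies E_q(X) = N/(Σ_{x'∈X} e^{−d(x₀,x')}). -/
/-- For a homogeneous finite metric space `X` with `N` points, every `q`-spread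
(for `q ≥ 0`, `q ≠ 1`) equals `N / ∑_{x'} e^{-d(x₀,x')}` for any point `x₀`. -/
theorem homogeneous_qSpread
    (X : Type*) [MetricSpace X] [Fintype X]
    (hhom : ∀ x y : X, ∃ f : X ≃ᵢ X, f x = y)
    (q : ℝ) (hq0 : 0 ≤ q) (hq1 : q ≠ 1) (x₀ : X) :
    ((1 / (Fintype.card X : ℝ)) *
        ∑ i : X, ((Fintype.card X : ℝ) / ∑ j : X, Real.exp (-dist i j)) ^ (1 - q))
          ^ (1 / (1 - q)) =
      (Fintype.card X : ℝ) / ∑ x' : X, Real.exp (-dist x₀ x') := by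
  have key : ∀ i : X, ∑ j : X, Real.exp (-dist i j) = ∑ j : X, Real.exp (-dist x₀ j) := by
    intro i
    obtain ⟨f, hf⟩ := hhom i x₀
    refine Fintype.sum_equiv f.toEquiv _ _ ?_
    intro j
    have h : dist (f i) (f j) = dist i j := f.isometry.dist_eq i j
    rw [hf] at h
    change _ = Real.exp (-dist x₀ (f j))
    rw [h]
  have hN : (Fintype.card X : ℝ) ≠ 0 := by
    have : Nonempty X := ⟨x₀⟩
    exact_mod_cast Fintype.card_ne_zero
  have hpos : 0 ≤ (Fintype.card X : ℝ) / ∑ x' : X, Real.exp (-dist x₀ x') := by positivity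
  have hq : 1 - q ≠ 0 := sub_ne_zero.mpr (Ne.symm hq1)
  simp_rw [key]
  rw [Finset.sum_const, Finset.card_univ, nsmul_eq_mul, ← mul_assoc, one_div_mul_cancel hN,
    one_mul, ← Real.rpow_mul hpos, mul_one_div_cancel hq, Real.rpow_one]
end

section
/- Let T be a tree (a connected acyclic simple graph) with N ≥ 1 vertices, let d denote the graph (shortest-path) distance on its vertex set, and let t > 0. Then there exists a weighting w on the metric space (V(T), t·d), i.e. a function w : V(T) → ℝ with Σ_{v∈V(T)} w(v) e^{−t·d(v,u)} = 1 for all u ∈ V(T), whose total weight is Σ_{v∈V(T)} w(v) = (N(e^t − 1) + 2)/(e^t + 1). In particular the magnitude of the scaled tree is |tT| = (N(e^t − 1) + 2)/(e^t + 1). -/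
open Classical in
theorem tree_parent {V : Type*} (G : SimpleGraph V) (hG : G.IsTree) (u x : V) (hx : x ≠ u) :
    ∃! v, G.Adj x v ∧ G.dist x u = G.dist v u + 1 := by
  obtain ⟨p, hp, hl⟩ := hG.isConnected.exists_path_of_dist x u
  cases p with
  | nil => exact absurd rfl hx
  | @cons _ v _ h p =>
    have h1 : G.dist v u ≤ p.length := G.dist_le p
    have h2 : G.dist x u ≤ G.dist v u + 1 := by
      obtain ⟨q, hq⟩ := hG.isConnected.exists_walk_length_eq_dist v u
      have := G.dist_le (SimpleGraph.Walk.cons h q)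
      simpa [hq] using this
    rw [SimpleGraph.Walk.length_cons] at hl
    refine ⟨v, ⟨h, by omega⟩, ?_⟩
    rintro y ⟨hy, hd⟩
    obtain ⟨q, hq⟩ := hG.isConnected.exists_walk_length_eq_dist y u
    have hc : (SimpleGraph.Walk.cons hy q).IsPath :=
      SimpleGraph.Walk.isPath_of_length_eq_dist _ (by simp [hq, hd])
    have := (hG.existsUnique_path x u).unique hc hp
    injection this

open Classical in
theorem tree_deg_sum {V : Type*} [Fintype V] (G : SimpleGraph V) (hG : G.IsTree) (u : V) (r : ℝ) :
    r * ∑ v, (G.degree v : ℝ) * r ^ G.dist v u = (1 + r) * (∑ v, r ^ G.dist v u - 1) := by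
  set P : V → V → Prop := fun x v => G.Adj x v ∧ G.dist x u = G.dist v u + 1 with hP
  have hcnt : ∀ x, ∑ v, (if P x v then (1:ℝ) else 0) = if x = u then 0 else 1 := by
    intro x
    split_ifs with hx
    · subst hx
      apply Finset.sum_eq_zero
      intro v _
      simp [hP]
    · obtain ⟨v, hv, hu⟩ := tree_parent G hG u x hx
      rw [Finset.sum_eq_single v]
      · exact if_pos hv
      · intro b _ hb
        exact if_neg fun h => hb (hu b h)
      · simp
  have hdeg : ∀ v, (G.degree v : ℝ) =
      ∑ x, (if P v x then (1:ℝ) else 0) + ∑ x, (if P x v then (1:ℝ) else 0) := by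
    intro v
    rw [← Finset.sum_add_distrib, ← G.card_neighborFinset_eq_degree, Finset.card_eq_sum_ones,
      G.neighborFinset_eq_filter, Finset.sum_filter]
    push_cast
    apply Finset.sum_congr rfl
    intro x _
    by_cases h : G.Adj v x
    · have h3 := hG.dist_eq_dist_add_one_of_adj u h
      rw [SimpleGraph.dist_comm (u := u) (v := v), SimpleGraph.dist_comm (u := u) (v := x)] at h3
      rcases h3 with h3 | h3
      · simp [hP, h, h3]; omega
      · simp [hP, h, h.symm, h3]; omega
    · have h' : ¬ G.Adj x v := fun k => h k.symm
      simp [hP, h, h']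
  have hS : ∑ x, (if x = u then (0:ℝ) else 1) * r ^ G.dist x u = ∑ v, r ^ G.dist v u - 1 := by
    have : ∀ x, (if x = u then (0:ℝ) else 1) * r ^ G.dist x u
        = r ^ G.dist x u - if x = u then 1 else 0 := by
      intro x
      split_ifs with h
      · subst h; simp
      · simp
    simp [this, Finset.sum_sub_distrib]
  have h2 : r * ∑ v, (∑ x, (if P x v then (1:ℝ) else 0)) * r ^ G.dist v u
      = ∑ v, r ^ G.dist v u - 1 := by
    rw [← hS]
    simp_rw [← hcnt, Finset.mul_sum, Finset.sum_mul, Finset.mul_sum]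
    rw [Finset.sum_comm]
    refine Finset.sum_congr rfl fun x _ => Finset.sum_congr rfl fun v _ => ?_
    split_ifs with h
    · rw [h.2]; ring
    · simp
  simp_rw [hdeg, add_mul, Finset.sum_add_distrib, mul_add, h2, hcnt, hS]
  ring


/-- For a tree `T` with `N ≥ 1` vertices, the scaled metric space `tT` (with the
shortest-path metric scaled by `t > 0`) admits a weighting whose total weight is
`(N(e^t − 1) + 2)/(e^t + 1)`; i.e. the magnitude is `|tT| = (N(e^t − 1) + 2)/(e^t + 1)`. -/
theorem tree_magnitude
    (V : Type*) [Fintype V] (G : SimpleGraph V) (hG : G.IsTree)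
    (hN : 1 ≤ Fintype.card V) (t : ℝ) (ht : 0 < t) :
    ∃ w : V → ℝ,
      (∀ u : V, ∑ v : V, w v * Real.exp (-(t * (G.dist v u : ℝ))) = 1) ∧
      ∑ v : V, w v =
        ((Fintype.card V : ℝ) * (Real.exp t - 1) + 2) / (Real.exp t + 1) := by
  classical
  set q := Real.exp (-t) with hq
  have hq0 : 0 < q := Real.exp_pos _
  have hexp : Real.exp t = q⁻¹ := by rw [hq, Real.exp_neg, inv_inv]
  have hpow : ∀ n : ℕ, Real.exp (-(t * (n : ℝ))) = q ^ n := by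
    intro n
    rw [hq, ← Real.exp_nat_mul]; ring_nf
  refine ⟨fun v => (1 + q - q * G.degree v) / (1 + q), ?_, ?_⟩
  · intro u
    have h := tree_deg_sum G hG u q
    have e : ∀ v, (1 + q - q * (G.degree v : ℝ)) / (1 + q) * Real.exp (-(t * (G.dist v u : ℝ)))
        = ((1 + q) * q ^ G.dist v u - q * ((G.degree v : ℝ) * q ^ G.dist v u)) / (1 + q) := by
      intro v; rw [hpow]; ring
    simp_rw [e]
    rw [← Finset.sum_div, Finset.sum_sub_distrib, ← Finset.mul_sum, ← Finset.mul_sum, h]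
    field_simp
    ring
  · obtain ⟨u⟩ : Nonempty V := hG.isConnected.nonempty
    have h := tree_deg_sum G hG u 1
    simp at h
    rw [← Finset.sum_div, Finset.sum_sub_distrib, ← Finset.mul_sum, h, hexp]
    simp
    field_simp
    ring
end

section
/- Let t > 0 and N ≥ 1, and let tL_N be the linear tree with N points: the metric space {1,…,N} with d(i,j) = t|i−j|. Then its spread is E₀(tL_N) = Σ_{i=1}^N (e^t − 1)/(1 + e^t − e^{−t(i−1)} − e^{−t(N−i)}). -/
lemma base_sum (t : ℝ) (i : ℕ) :
    (∑ j ∈ Finset.range (i + 1), Real.exp (-(t * |(i : ℝ) - (j : ℝ)|))) * (Real.exp t - 1)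
      = Real.exp t - Real.exp (-(t * (i : ℝ))) := by
  induction i with
  | zero => simp
  | succ k ih =>
    have h : ∑ j ∈ Finset.range (k + 1), Real.exp (-(t * |((k + 1 : ℕ) : ℝ) - (j : ℝ)|))
        = Real.exp (-t) * ∑ j ∈ Finset.range (k + 1), Real.exp (-(t * |(k : ℝ) - (j : ℝ)|)) := by
      rw [Finset.mul_sum]
      refine Finset.sum_congr rfl fun j hj => ?_
      have hj' : (j : ℝ) ≤ k := by
        exact_mod_cast Nat.lt_succ_iff.mp (Finset.mem_range.mp hj)
      rw [← Real.exp_add, abs_of_nonneg (by push_cast; linarith), abs_of_nonneg (by linarith)]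
      congr 1
      push_cast
      ring
    rw [Finset.sum_range_succ, h, add_mul, mul_assoc, ih, mul_sub, ← Real.exp_add, ← Real.exp_add]
    have e : -t + -(t * (k : ℝ)) = -(t * ((k + 1 : ℕ) : ℝ)) := by push_cast; ring
    rw [e]
    simp

lemma full_sum (t : ℝ) (i m : ℕ) (h : i + 1 ≤ m) :
    (∑ j ∈ Finset.range m, Real.exp (-(t * |(i : ℝ) - (j : ℝ)|))) * (Real.exp t - 1)
      = 1 + Real.exp t - Real.exp (-(t * (i : ℝ)))
        - Real.exp (-(t * ((m : ℝ) - 1 - (i : ℝ)))) := by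
  induction m, h using Nat.le_induction with
  | base =>
    rw [base_sum]
    have e : -(t * (((i + 1 : ℕ) : ℝ) - 1 - (i : ℝ))) = 0 := by push_cast; ring
    rw [e, Real.exp_zero]
    ring
  | succ n hn ih =>
    have hn' : (i : ℝ) + 1 ≤ n := by exact_mod_cast hn
    rw [Finset.sum_range_succ, add_mul, ih, abs_of_nonpos (by linarith), mul_sub (Real.exp _), ← Real.exp_add]
    have e1 : -(t * -((i : ℝ) - n)) + t = -(t * ((n : ℝ) - 1 - i)) := by ring
    have e2 : -(t * -((i : ℝ) - n)) = -(t * (((n + 1 : ℕ) : ℝ) - 1 - i)) := by push_cast; ring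
    rw [e1, e2]
    ring

/-- The spread of the linear tree `tL_N`, i.e. the metric space `{1, …, N}` with
`d(i,j) = t|i−j|`, is `∑_{i=1}^N (e^t − 1)/(1 + e^t − e^{−t(i−1)} − e^{−t(N−i)})`.
(Here the points are indexed by `Fin N`, so `i : Fin N` corresponds to `i+1`.) -/
theorem spread_linear_tree
    (N : ℕ) (hN : 1 ≤ N) (t : ℝ) (ht : 0 < t) :
    ∑ i : Fin N, (∑ j : Fin N, Real.exp (-(t * |(i : ℝ) - (j : ℝ)|)))⁻¹ =
      ∑ i : Fin N,
        (Real.exp t - 1) /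
          (1 + Real.exp t - Real.exp (-(t * (i : ℝ)))
            - Real.exp (-(t * ((N : ℝ) - 1 - (i : ℝ))))) := by
  refine Finset.sum_congr rfl fun i _ => ?_
  have hp : Real.exp t - 1 ≠ 0 := by
    have := Real.add_one_lt_exp ht.ne'
    linarith
  rw [← full_sum t i N i.2, Finset.sum_range (fun j : ℕ => Real.exp (-(t * |(i : ℝ) - (j : ℝ)|))),
    mul_comm, div_mul_cancel_left₀ hp]
end

section
/- Let K_{3,2} be the five-point metric space {a₁,a₂,a₃,b₁,b₂} with d(a_i, b_j) = 1 for all i,j, d(a_i, a_j) = 2 for i ≠ j, and d(b_1, b_2) = 2, and let t = ln(√2) = (1/2)ln 2. Then the scaled space tK_{3,2} admits no weighting: there is no function w on the five points with Σ_x w(x) e^{−t·d(x,y)} = 1 for all points y. In particular tK_{3,2} has no magnitude at this value of t. -/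
/-- The metric of the five-point space `K_{3,2}`: points on the same side of the
bipartition are at distance `2`, points on opposite sides at distance `1`. -/
def K32dist : (Fin 3 ⊕ Fin 2) → (Fin 3 ⊕ Fin 2) → ℝ
  | Sum.inl i, Sum.inl j => if i = j then 0 else 2
  | Sum.inr i, Sum.inr j => if i = j then 0 else 2
  | _, _ => 1

/-- At the scale `t = ln √2 = (1/2) ln 2`, the space `tK_{3,2}` admits no
weighting: there is no `w` with `∑_x w(x) e^{−t·d(x,y)} = 1` for all `y`.
In particular `tK_{3,2}` has no magnitude at this value of `t`. -/
theorem K32_no_weighting :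
    ¬ ∃ w : Fin 3 ⊕ Fin 2 → ℝ,
        ∀ y : Fin 3 ⊕ Fin 2,
          ∑ x : Fin 3 ⊕ Fin 2,
            w x * Real.exp (-(((1 / 2 : ℝ) * Real.log 2) * K32dist x y)) = 1 := by
  rintro ⟨w, hw⟩
  obtain ⟨q, hq⟩ : ∃ q : ℝ, q = Real.exp (-(1 / 2 * Real.log 2)) := ⟨_, rfl⟩
  have h2 : Real.exp (-(1 / 2 * Real.log 2 * 2)) = 1 / 2 := by
    have : -(1 / 2 * Real.log 2 * 2) = -Real.log 2 := by ring
    rw [this, Real.exp_neg, Real.exp_log (by norm_num)]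
    norm_num
  have hqq : q * q = 1 / 2 := by
    rw [hq, ← Real.exp_add]
    refine Eq.trans ?_ h2
    congr 1
    ring
  have h1 : Real.exp (-(1 / 2 * Real.log 2 * 1)) = q := by rw [hq, mul_one]
  have h0 : Real.exp (-(1 / 2 * Real.log 2 * 0)) = 1 := by simp
  have a0 := hw (Sum.inl 0)
  have a1 := hw (Sum.inl 1)
  have a2 := hw (Sum.inl 2)
  have b0 := hw (Sum.inr 0)
  have b1 := hw (Sum.inr 1)
  simp only [Fintype.sum_sum_type, Fin.sum_univ_three, Fin.sum_univ_two, K32dist, Fin.reduceEq,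
    if_true, if_false, h0, h1, h2] at a0 a1 a2 b0 b1
  have key : 3 * q = 2 := by
    linear_combination (-q) * (a0 + a1 + a2) + (b0 + b1)
      + 3 * (w (Sum.inr 0) + w (Sum.inr 1)) * hqq
  nlinarith
end

section
/- Let ℓ > 0 and let L_ℓ = [0,ℓ] ⊂ ℝ with the Euclidean metric and Lebesgue measure. Then the spread of L_ℓ satisfies E₀(L_ℓ) := ∫₀^ℓ (∫₀^ℓ e^{−|x−y|} dy)^{−1} dx = arctanh(√(1 − e^{−ℓ}))/√(1 − e^{−ℓ}). -/
/-- The inverse hyperbolic tangent. -/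
noncomputable def arctanh (x : ℝ) : ℝ := (1 / 2) * Real.log ((1 + x) / (1 - x))

lemma inner_spread (ℓ x : ℝ) (h0 : 0 ≤ x) (h1 : x ≤ ℓ) :
    (∫ y in (0 : ℝ)..ℓ, Real.exp (-|x - y|)) = 2 - Real.exp (-x) - Real.exp (x - ℓ) := by
  have hc : Continuous fun y : ℝ => Real.exp (-|x - y|) := by fun_prop
  rw [← intervalIntegral.integral_add_adjacent_intervals
    (hc.intervalIntegrable 0 x) (hc.intervalIntegrable x ℓ)]
  have e1 : (∫ y in (0 : ℝ)..x, Real.exp (-|x - y|)) = 1 - Real.exp (-x) := by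
    have : (∫ y in (0 : ℝ)..x, Real.exp (-|x - y|)) = ∫ y in (0 : ℝ)..x, Real.exp (y - x) := by
      apply intervalIntegral.integral_congr
      intro y hy
      rw [Set.uIcc_of_le h0] at hy
      have : |x - y| = x - y := abs_of_nonneg (by linarith [hy.2])
      simp [this]
    rw [this, intervalIntegral.integral_comp_sub_right (fun y => Real.exp y)]
    simp
  have e2 : (∫ y in x..ℓ, Real.exp (-|x - y|)) = 1 - Real.exp (x - ℓ) := by
    have : (∫ y in x..ℓ, Real.exp (-|x - y|)) = ∫ y in x..ℓ, Real.exp (x - y) := by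
      apply intervalIntegral.integral_congr
      intro y hy
      rw [Set.uIcc_of_le h1] at hy
      have : |x - y| = -(x - y) := abs_of_nonpos (by linarith [hy.1])
      simp [this]
    rw [this, intervalIntegral.integral_comp_sub_left (fun y => Real.exp y)]
    simp
  rw [e1, e2]; ring

/-- The spread of the interval `L_ℓ = [0, ℓ]` with Lebesgue measure:
`E₀(L_ℓ) = ∫₀^ℓ (∫₀^ℓ e^{−|x−y|} dy)⁻¹ dx = arctanh(√(1−e^{−ℓ}))/√(1−e^{−ℓ})`. -/
theorem spread_interval (ℓ : ℝ) (hℓ : 0 < ℓ) :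
    (∫ x in (0 : ℝ)..ℓ, (∫ y in (0 : ℝ)..ℓ, Real.exp (-|x - y|))⁻¹) =
      arctanh (Real.sqrt (1 - Real.exp (-ℓ))) / Real.sqrt (1 - Real.exp (-ℓ)) := by
  have ha0 : 0 < Real.exp (-ℓ) := Real.exp_pos _
  have ha1 : Real.exp (-ℓ) < 1 := by rw [Real.exp_lt_one_iff]; linarith
  have hs0 : 0 < √(1 - Real.exp (-ℓ)) := Real.sqrt_pos.2 (by linarith)
  have hsq : √(1 - Real.exp (-ℓ)) ^ 2 = 1 - Real.exp (-ℓ) := Real.sq_sqrt (by linarith)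
  set s := √(1 - Real.exp (-ℓ)) with hs
  have hs1 : s < 1 := by nlinarith
  have hsum : ∀ x ∈ Set.Icc 0 ℓ, 0 < s + (Real.exp (x - ℓ) - 1) ∧
      0 < s - (Real.exp (x - ℓ) - 1) := by
    intro x hx
    have h1 : Real.exp (-ℓ) ≤ Real.exp (x - ℓ) := Real.exp_le_exp.2 (by linarith [hx.1])
    have h2 : Real.exp (x - ℓ) ≤ 1 := Real.exp_le_one_iff.2 (by linarith [hx.2])
    constructor <;> nlinarith
  have hpos : ∀ x ∈ Set.Icc 0 ℓ, Real.exp (x - ℓ) * (2 - Real.exp (-x) - Real.exp (x - ℓ)) =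
      (s + (Real.exp (x - ℓ) - 1)) * (s - (Real.exp (x - ℓ) - 1)) := by
    intro x hx
    have : Real.exp (x - ℓ) * Real.exp (-x) = Real.exp (-ℓ) := by
      rw [← Real.exp_add]; ring_nf
    linear_combination -hsq - this
  have hne : ∀ x ∈ Set.Icc 0 ℓ, 2 - Real.exp (-x) - Real.exp (x - ℓ) ≠ 0 := by
    intro x hx h
    have h3 := mul_pos (hsum x hx).1 (hsum x hx).2
    rw [← hpos x hx, h] at h3
    simp at h3
  have hcongr : (∫ x in (0 : ℝ)..ℓ, (∫ y in (0 : ℝ)..ℓ, Real.exp (-|x - y|))⁻¹) =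
      ∫ x in (0 : ℝ)..ℓ, (2 - Real.exp (-x) - Real.exp (x - ℓ))⁻¹ := by
    apply intervalIntegral.integral_congr
    intro x hx
    rw [Set.uIcc_of_le hℓ.le] at hx
    simp only [inner_spread ℓ x hx.1 hx.2]
  rw [hcongr, intervalIntegral.integral_eq_sub_of_hasDerivAt (f := fun x =>
    (Real.log (s + (Real.exp (x - ℓ) - 1)) - Real.log (s - (Real.exp (x - ℓ) - 1))) / (2 * s))]
  · have h1s : s + (Real.exp (0 - ℓ) - 1) = s * (1 - s) := by
      rw [zero_sub]; linear_combination hsq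
    have h2s : s - (Real.exp (0 - ℓ) - 1) = s * (1 + s) := by
      rw [zero_sub]; linear_combination -hsq
    simp only [h1s, h2s, arctanh]
    rw [Real.log_div (by linarith) (by linarith), Real.log_mul (by linarith) (by linarith),
      Real.log_mul (by linarith) (by linarith)]
    simp
    field_simp
    ring
  · intro x hx
    rw [Set.uIcc_of_le hℓ.le] at hx
    have hd : HasDerivAt (fun x => Real.exp (x - ℓ) - 1) (Real.exp (x - ℓ)) x := by
      simpa using (((hasDerivAt_id x).sub_const ℓ).exp).sub_const 1
    obtain ⟨p1, p2⟩ := hsum x hx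
    have := (((hd.const_add s).log p1.ne').sub ((hd.const_sub s).log p2.ne')).div_const (2 * s)
    refine HasDerivAt.congr_deriv (f := fun x => (Real.log (s + (Real.exp (x - ℓ) - 1)) -
      Real.log (s - (Real.exp (x - ℓ) - 1))) / (2 * s)) this ?_
    symm
    have hE := Real.exp_pos (x - ℓ)
    have h4 := hne x hx
    have h5 := hpos x hx
    have h6 : (2 - Real.exp (-x) - Real.exp (x - ℓ)) = (s + (Real.exp (x - ℓ) - 1)) * (s - (Real.exp (x - ℓ) - 1)) / Real.exp (x - ℓ) := by
      rw [← h5]; field_simp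
    rw [h6]
    generalize Real.exp (x - ℓ) = E at *
    have p1' := p1.ne'
    have p2' := p2.ne'
    rw [inv_div, neg_div, sub_neg_eq_add, div_add_div _ _ p1' p2', div_div, div_eq_div_iff (by positivity) (by positivity)]
    ring
  · apply ContinuousOn.intervalIntegrable
    rw [Set.uIcc_of_le hℓ.le]
    exact ContinuousOn.inv₀ (by fun_prop) hne
end

section
/- Let ℓ > 0 and let L_ℓ = [0,ℓ] ⊂ ℝ with the Euclidean metric and Lebesgue measure. Then the order-infinity spread E_∞(L_ℓ) := inf_{x∈[0,ℓ]} ℓ/(∫₀^ℓ e^{−|x−y|} dy) equals ℓ/(2(1 − e^{−ℓ/2})); equivalently, inf_{x∈[0,ℓ]} ℓ/(2 − e^{−x} − e^{−(ℓ−x)}) = ℓ/(2(1 − e^{−ℓ/2})). -/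
lemma spread_integral (ℓ x : ℝ) (h0 : 0 ≤ x) (h1 : x ≤ ℓ) :
    ∫ y in (0 : ℝ)..ℓ, Real.exp (-|x - y|) = 2 - Real.exp (-x) - Real.exp (-(ℓ - x)) := by
  have hc : Continuous (fun y : ℝ => Real.exp (-|x - y|)) := by fun_prop
  rw [← intervalIntegral.integral_add_adjacent_intervals
    (hc.intervalIntegrable 0 x) (hc.intervalIntegrable x ℓ)]
  have e1 : ∫ y in (0 : ℝ)..x, Real.exp (-|x - y|) = 1 - Real.exp (-x) := by
    have : ∫ y in (0 : ℝ)..x, Real.exp (-|x - y|) = ∫ y in (0 : ℝ)..x, Real.exp (y - x) := by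
      apply intervalIntegral.integral_congr
      intro y hy
      rw [Set.uIcc_of_le h0] at hy
      simp only
      rw [abs_of_nonneg (by linarith [hy.2])]
      congr 1; ring
    rw [this, intervalIntegral.integral_comp_sub_right (fun y => Real.exp y) x, integral_exp]
    simp
  have e2 : ∫ y in x..ℓ, Real.exp (-|x - y|) = 1 - Real.exp (-(ℓ - x)) := by
    have : ∫ y in x..ℓ, Real.exp (-|x - y|) = ∫ y in x..ℓ, Real.exp (x - y) := by
      apply intervalIntegral.integral_congr
      intro y hy
      rw [Set.uIcc_of_le h1] at hy
      simp only
      rw [abs_of_nonpos (by linarith [hy.1])]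
      congr 1; ring
    rw [this, intervalIntegral.integral_comp_sub_left (fun y => Real.exp y) x, integral_exp]
    simp
  rw [e1, e2]; ring

/-- The order-infinity spread of the interval `L_ℓ = [0, ℓ]` with Lebesgue
measure: `E_∞(L_ℓ) = inf_{x ∈ [0,ℓ]} ℓ/(∫₀^ℓ e^{−|x−y|} dy) = ℓ/(2(1 − e^{−ℓ/2}))`. -/
theorem order_infinity_spread_interval (ℓ : ℝ) (hℓ : 0 < ℓ) :
    sInf ((fun x : ℝ => ℓ / ∫ y in (0 : ℝ)..ℓ, Real.exp (-|x - y|)) ''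
        Set.Icc 0 ℓ) =
      ℓ / (2 * (1 - Real.exp (-(ℓ / 2)))) := by
  apply IsLeast.csInf_eq
  constructor
  · refine ⟨ℓ / 2, ⟨by linarith, by linarith⟩, ?_⟩
    simp only
    rw [spread_integral ℓ (ℓ / 2) (by linarith) (by linarith)]
    have : ℓ - ℓ / 2 = ℓ / 2 := by ring
    rw [this]
    congr 1; ring
  · rintro _ ⟨x, ⟨h0, h1⟩, rfl⟩
    simp only
    rw [spread_integral ℓ x h0 h1]
    have hx : Real.exp (-x) = Real.exp (-x / 2) ^ 2 := by
      rw [← Real.exp_nat_mul]; congr 1; push_cast; ring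
    have hy : Real.exp (-(ℓ - x)) = Real.exp (-(ℓ - x) / 2) ^ 2 := by
      rw [← Real.exp_nat_mul]; congr 1; push_cast; ring
    have hm : Real.exp (-(ℓ / 2)) = Real.exp (-x / 2) * Real.exp (-(ℓ - x) / 2) := by
      rw [← Real.exp_add]; congr 1; ring
    have hpos : 0 < 2 - Real.exp (-x) - Real.exp (-(ℓ - x)) := by
      rcases h0.eq_or_lt with h | h
      · have a : Real.exp (-x) ≤ 1 := Real.exp_le_one_iff.2 (by linarith)
        have b : Real.exp (-(ℓ - x)) < 1 := Real.exp_lt_one_iff.2 (by linarith)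
        linarith
      · have a : Real.exp (-x) < 1 := Real.exp_lt_one_iff.2 (by linarith)
        have b : Real.exp (-(ℓ - x)) ≤ 1 := Real.exp_le_one_iff.2 (by linarith)
        linarith
    apply div_le_div_of_nonneg_left hℓ.le hpos
    rw [hx, hy, hm]
    nlinarith [sq_nonneg (Real.exp (-x / 2) - Real.exp (-(ℓ - x) / 2))]
end

section
/- Let R > 0 and let S¹_R be the circle of radius R with its intrinsic (arc-length) metric and arc-length measure, modelled as the interval [0, 2πR) with distance d(x,y) = min(|x−y|, 2πR − |x−y|). Then the spread of the circle is E₀(S¹_R) := ∫₀^{2πR} (∫₀^{2πR} e^{−min(|x−y|, 2πR−|x−y|)} dy)^{−1} dx = πR/(1 − e^{−πR}). -/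
lemma spread_circle_inner (a : ℝ) (ha : 0 < a) (x : ℝ) (hx0 : 0 ≤ x) (hx1 : x ≤ 2 * a) :
    (∫ y in (0 : ℝ)..(2 * a), Real.exp (-min |x - y| (2 * a - |x - y|)))
      = 2 * (1 - Real.exp (-a)) := by
  have hc : Continuous (fun t : ℝ => Real.exp (-min |t| (2 * a - |t|))) := by fun_prop
  have hi : ∀ u v : ℝ, IntervalIntegrable (fun t : ℝ => Real.exp (-min |t| (2 * a - |t|)))
      MeasureTheory.volume u v := fun u v => hc.intervalIntegrable u v
  rw [intervalIntegral.integral_comp_sub_left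
    (fun t : ℝ => Real.exp (-min |t| (2 * a - |t|))) x]
  rw [← intervalIntegral.integral_add_adjacent_intervals (hi (x - 2 * a) 0) (hi 0 (x - 0))]
  have h1 : (∫ t in (x - 2 * a)..0, Real.exp (-min |t| (2 * a - |t|)))
      = ∫ t in x..(2 * a), Real.exp (-min |t| (2 * a - |t|)) := by
    have := intervalIntegral.integral_comp_add_right (a := x - 2 * a) (b := 0)
      (fun t : ℝ => Real.exp (-min |t| (2 * a - |t|))) (2 * a)
    rw [sub_add_cancel, zero_add] at this
    rw [← this]
    apply intervalIntegral.integral_congr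
    intro t ht
    rw [Set.uIcc_of_le (by linarith)] at ht
    obtain ⟨h1, h2⟩ := ht
    simp only
    rw [abs_of_nonpos h2, abs_of_nonneg (by linarith : 0 ≤ t + 2 * a), min_comm]
    congr 3 <;> ring
  rw [h1, sub_zero, add_comm, intervalIntegral.integral_add_adjacent_intervals (hi _ _) (hi _ _),
    ← intervalIntegral.integral_add_adjacent_intervals (hi 0 a) (hi a (2 * a))]
  have h2 : (∫ t in (0 : ℝ)..a, Real.exp (-min |t| (2 * a - |t|))) = 1 - Real.exp (-a) := by
    have : (∫ t in (0 : ℝ)..a, Real.exp (-min |t| (2 * a - |t|)))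
        = ∫ t in (0 : ℝ)..a, Real.exp (-t) := by
      apply intervalIntegral.integral_congr
      intro t ht
      rw [Set.uIcc_of_le ha.le] at ht
      obtain ⟨h1, h2⟩ := ht
      simp only
      rw [abs_of_nonneg h1, min_eq_left (by linarith)]
    rw [this, intervalIntegral.integral_comp_neg (fun t => Real.exp t), integral_exp]
    simp
  have h3 : (∫ t in a..(2 * a), Real.exp (-min |t| (2 * a - |t|))) = 1 - Real.exp (-a) := by
    have : (∫ t in a..(2 * a), Real.exp (-min |t| (2 * a - |t|)))
        = ∫ t in a..(2 * a), Real.exp (t - 2 * a) := by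
      apply intervalIntegral.integral_congr
      intro t ht
      rw [Set.uIcc_of_le (by linarith)] at ht
      obtain ⟨h1, h2⟩ := ht
      simp only
      rw [abs_of_nonneg (by linarith), min_eq_right (by linarith), neg_sub]
    rw [this, intervalIntegral.integral_comp_sub_right (fun t => Real.exp t), integral_exp,
      sub_self, Real.exp_zero, show a - 2 * a = -a by ring]
  rw [h2, h3]; ring


open Real in
/-- The spread of the circle `S¹_R` of radius `R` with its intrinsic metric,
modelled as `[0, 2πR)` with distance `d(x,y) = min(|x−y|, 2πR − |x−y|)` and
arc-length (Lebesgue) measure: `E₀(S¹_R) = πR/(1 − e^{−πR})`. -/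
theorem spread_circle (R : ℝ) (hR : 0 < R) :
    (∫ x in (0 : ℝ)..(2 * π * R),
        (∫ y in (0 : ℝ)..(2 * π * R),
          Real.exp (-min |x - y| (2 * π * R - |x - y|)))⁻¹) =
      π * R / (1 - Real.exp (-(π * R))) := by

  have ha : 0 < π * R := by positivity
  rw [show 2 * π * R = 2 * (π * R) by ring]
  have h : ∀ x ∈ Set.uIcc (0 : ℝ) (2 * (π * R)),
      (∫ y in (0 : ℝ)..(2 * (π * R)),
          Real.exp (-min |x - y| (2 * (π * R) - |x - y|)))⁻¹
        = (2 * (1 - Real.exp (-(π * R))))⁻¹ := by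
    intro x hx
    rw [Set.uIcc_of_le (by linarith)] at hx
    rw [spread_circle_inner _ ha x hx.1 hx.2]
  rw [intervalIntegral.integral_congr h, intervalIntegral.integral_const]
  have hlt : Real.exp (-(π * R)) < 1 := by
    rw [Real.exp_lt_one_iff]; linarith
  have hne : 1 - Real.exp (-(π * R)) ≠ 0 := by linarith
  rw [smul_eq_mul, sub_zero]
  field_simp
end
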